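/- Let p be a prime, let r be an integer, and let n be a nonnegative integer with (p−1) | n. Then for every integer b ≥ 2 one has F_p(n,r) ≡ F_p(n mod φ(p^b), r) (mod p^b) and F_p(n+p−2, r) ≡ F_p((n mod φ(p^b)) + p−2, r) (mod p^b), where φ is Euler's totient. Consequently, if moreover n > 0, then F_p(pn,r) + p·[p | r] − 1 ≡ 0 (mod p^{v+1}) where v is the p-adic valuation of pn. -/

import Mathlib

open Finset

/-- `x ≡ y (mod p^c)` for rationals: `x = y` or the `p`-adic valuation of `x - y`
is at least `c`. -/
def modCong (p : ℕ) (c : ℤ) (x y : ℚ) : Prop :=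
  x = y ∨ c ≤ padicValRat p (x - y)

/-- `C_p(n,r) = ∑_{0 ≤ k ≤ n, k ≡ r (mod p)} (-1)^k * binom(n,k)`. -/
def Cp (p n : ℕ) (r : ℤ) : ℚ :=
  ∑ k ∈ range (n+1), if ((k : ℤ) - r) % p = 0 then (-1 : ℚ)^k * (n.choose k) else 0

/-- The Fleck quotient `F_p(n,r) = (-p)^{-⌊(n-1)/(p-1)⌋} C_p(n,r) + [n = 0]`. -/
noncomputable def Fp (p n : ℕ) (r : ℤ) : ℚ :=
  (-(p:ℚ)) ^ (-(Int.fdiv ((n:ℤ) - 1) ((p:ℤ) - 1))) * Cp p n r + (if n = 0 then 1 else 0)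

open Polynomial

/-- The linear functional `f ↦ Tr (ζ ^ (-r) * f ζ)` on `ℤ[X]`, `ζ` a primitive `p`-th root of
unity: it sends `X ^ k` to `p - 1` if `k ≡ r (mod p)` and to `-1` otherwise. -/
noncomputable def twistedTrace (p : ℕ) (r : ℤ) : ℤ[X] →ₗ[ℤ] ℤ :=
  Polynomial.lsum fun k =>
    ((if ((k : ℤ) - r) % p = 0 then (p : ℤ) else 0) - 1) • LinearMap.id

lemma twistedTrace_monomial (p : ℕ) (r : ℤ) (k : ℕ) (a : ℤ) :
    twistedTrace p r (monomial k a) =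
      ((if ((k : ℤ) - r) % p = 0 then (p : ℤ) else 0) - 1) * a := by
  rw [twistedTrace, Polynomial.lsum_apply, Polynomial.sum_monomial_index _ _ (by simp)]
  rfl

lemma twistedTrace_C_mul (p : ℕ) (r a : ℤ) (f : ℤ[X]) :
    twistedTrace p r (C a * f) = a * twistedTrace p r f := by
  rw [← smul_eq_C_mul, map_smul, smul_eq_mul]

lemma sum_range_ite_modEq (p : ℕ) (hp : 0 < p) (s c : ℤ) :
    ∑ i ∈ range p, (if ((i : ℤ) - s) % p = 0 then c else 0) = c := by
  have hp' : (p : ℤ) ≠ 0 := by exact_mod_cast hp.ne'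
  have h0 := Int.emod_nonneg s hp'
  have h1 := Int.emod_lt_of_pos s (by exact_mod_cast hp : (0 : ℤ) < p)
  rw [Finset.sum_eq_single (s % p).toNat]
  · rw [if_pos]
    rw [Int.toNat_of_nonneg h0, Int.sub_emod]
    simp
  · intro i hi hne
    rw [if_neg]
    intro h
    apply hne
    have h2 : (i : ℤ) % p = s % p := Int.emod_eq_emod_iff_emod_sub_eq_zero.2 h
    rw [Int.emod_eq_of_lt (by positivity) (by exact_mod_cast Finset.mem_range.1 hi)] at h2
    omega
  · intro h
    exact absurd (Finset.mem_range.2 (by omega)) h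

lemma twistedTrace_geom_sum_mul (p : ℕ) (hp : 0 < p) (r : ℤ) (g : ℤ[X]) :
    twistedTrace p r ((∑ i ∈ range p, X ^ i) * g) = 0 := by
  induction g using Polynomial.induction_on' with
  | add f g hf hg => rw [mul_add, map_add, hf, hg, add_zero]
  | monomial j a =>
    rw [Finset.sum_mul, map_sum]
    have h : ∀ i ∈ range p, twistedTrace p r (X ^ i * monomial j a) =
        ((if ((i : ℤ) - (r - j)) % p = 0 then (p : ℤ) else 0) - 1) * a := by
      intro i _
      rw [X_pow_mul_monomial, twistedTrace_monomial]
      congr 4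
      push_cast
      ring_nf
    rw [Finset.sum_congr rfl h, ← Finset.sum_mul, Finset.sum_sub_distrib,
      sum_range_ite_modEq p hp]
    simp

lemma dvd_twistedTrace_one_sub_X_mul (p : ℕ) (r : ℤ) (g : ℤ[X]) :
    (p : ℤ) ∣ twistedTrace p r ((1 - X) * g) := by
  induction g using Polynomial.induction_on' with
  | add f g hf hg =>
    rw [mul_add, map_add]
    exact dvd_add hf hg
  | monomial j a =>
    rw [sub_mul, one_mul, X_mul_monomial, map_sub, twistedTrace_monomial, twistedTrace_monomial,
      ← sub_mul]
    apply Dvd.dvd.mul_right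
    split_ifs <;> ring_nf <;> simp

lemma twistedTrace_one_sub_X_pow (p : ℕ) (r : ℤ) (n : ℕ) :
    (twistedTrace p r ((1 - X) ^ n) : ℚ) = p * Cp p n r - (if n = 0 then 1 else 0) := by
  have h : ((1 - X : ℤ[X]) ^ n) =
      ∑ k ∈ range (n + 1), monomial k ((-1 : ℤ) ^ k * (n.choose k : ℤ)) := by
    rw [sub_eq_neg_add, add_pow]
    refine Finset.sum_congr rfl fun k _ => ?_
    rw [← C_mul_X_pow_eq_monomial, neg_pow]
    simp only [one_pow, mul_one, C_mul, C_pow, C_neg, C_1]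
    simp only [map_natCast]
    ring
  have h0 : ∑ k ∈ range (n + 1), (-1 : ℚ) ^ k * (n.choose k : ℚ) = if n = 0 then 1 else 0 := by
    exact_mod_cast Int.alternating_sum_range_choose (n := n)
  rw [h, map_sum, Int.cast_sum, ← h0, Cp, Finset.mul_sum, ← Finset.sum_sub_distrib]
  refine Finset.sum_congr rfl fun k _ => ?_
  rw [twistedTrace_monomial]
  split_ifs <;> push_cast <;> ring

lemma exists_one_sub_X_pow_eq (p : ℕ) (hp : p.Prime) :
    ∃ W : ℤ[X], (1 - X : ℤ[X]) ^ (p - 1) =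
      (∑ i ∈ range p, X ^ i) - (p : ℤ[X]) * (1 + (1 - X) * W) := by
  have := Fact.mk hp
  have hmap : (((∑ i ∈ range p, X ^ i) - (1 - X) ^ (p - 1) : ℤ[X])).map
      (Int.castRingHom (ZMod p)) = 0 := by
    have hne : (1 - X : (ZMod p)[X]) ≠ 0 := by
      rw [← neg_ne_zero, neg_sub, ← C_1]
      exact X_sub_C_ne_zero _
    apply mul_left_cancel₀ hne
    simp only [Polynomial.map_sub, Polynomial.map_sum, Polynomial.map_pow, Polynomial.map_X,
      Polynomial.map_one]
    rw [mul_zero, mul_sub, mul_neg_geom_sum, mul_pow_sub_one hp.ne_zero, sub_pow_char]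
    simp
  have hdvd : C (p : ℤ) ∣ ((∑ i ∈ range p, X ^ i) - (1 - X) ^ (p - 1) : ℤ[X]) := by
    rw [C_dvd_iff_dvd_coeff]
    intro i
    have := congrArg (fun f => coeff f i) hmap
    simp only [coeff_map, coeff_zero, eq_intCast] at this
    exact (ZMod.intCast_zmod_eq_zero_iff_dvd _ _).1 this
  obtain ⟨U, hU⟩ := hdvd
  have hU1 : U.eval 1 = 1 := by
    have := congrArg (eval 1) hU
    have hp1 : p - 1 ≠ 0 := by have := hp.two_le; omega
    simp only [eval_sub, eval_finsetSum, eval_pow, eval_X, one_pow, eval_one, sub_self,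
      zero_pow hp1, eval_mul, eval_C, sum_const, card_range, sub_zero, nsmul_eq_mul,
      mul_one] at this
    have hp0 : (p : ℤ) ≠ 0 := by exact_mod_cast hp.ne_zero
    exact mul_left_cancel₀ hp0 (by rw [← this, mul_one])
  obtain ⟨V, hV⟩ : X - C 1 ∣ U - 1 := by
    rw [dvd_iff_isRoot]
    simp [IsRoot, hU1]
  refine ⟨-V, ?_⟩
  have hUV : 1 + (1 - X) * -V = U := by
    rw [C_1] at hV
    linear_combination -hV
  rw [hUV]
  simp only [map_natCast] at hU
  linear_combination -hU

lemma exists_one_add_pow_prime_eq {R : Type*} [CommRing R] {p : ℕ} (hp : p.Prime)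
    (a : R) : ∃ s : R, (1 + a) ^ p = 1 + a ^ p + p * a + p * a ^ 2 * s := by
  obtain ⟨f, hf⟩ := exists_add_pow_prime_eq hp (1 : ℤ[X]) X
  have hf0 : f.coeff 0 = 1 := by
    have h1 := congrArg (fun g => coeff g 1) hf
    have hX : (X ^ p : ℤ[X]).coeff 1 = 0 := by
      rw [coeff_X_pow, if_neg hp.one_lt.ne]
    have hm : ((p : ℤ[X]) * 1 * X * f).coeff 1 = p * f.coeff 0 := by
      rw [show (p : ℤ[X]) * 1 * X * f = C (p : ℤ) * (X * f) by simp; ring, coeff_C_mul,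
        coeff_X_mul]
    simp only [coeff_add, hX, hm, coeff_one_add_X_pow, one_pow, Nat.choose_one_right] at h1
    have hp0 : (p : ℤ) ≠ 0 := by exact_mod_cast hp.ne_zero
    apply mul_left_cancel₀ hp0
    rw [coeff_one] at h1
    simp at h1
    linarith
  obtain ⟨g, hg⟩ : X ∣ f - 1 := by
    rw [X_dvd_iff]
    simp [hf0]
  refine ⟨aeval a g, ?_⟩
  have h := congrArg (aeval a) hf
  have h' := congrArg (aeval a) hg
  simp only [map_add, map_sub, map_mul, map_pow, map_one, aeval_X, map_natCast, one_pow] at h h'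
  linear_combination h + (p : R) * a * h'

lemma mul_dvd_pow_prime_sub_one {R : Type*} [CommRing R] {p : ℕ} (hp : p.Prime) {k : ℕ}
    (hk : 1 ≤ k) {J x : R} (h : (p : R) ^ k * J ∣ x - 1) :
    (p : R) ^ (k + 1) * J ∣ x ^ p - 1 := by
  obtain ⟨y, hy⟩ := h
  obtain ⟨s, hs⟩ := exists_add_pow_prime_eq hp (1 : R) ((p : R) ^ k * J * y)
  have hx : x = 1 + (p : R) ^ k * J * y := by linear_combination hy
  have h1 : (p : R) ^ (k + 1) * J ∣ ((p : R) ^ k * J * y) ^ p := by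
    rw [mul_pow, mul_pow, ← pow_mul]
    apply Dvd.dvd.mul_right
    apply mul_dvd_mul
    · apply pow_dvd_pow
      nlinarith [hp.two_le]
    · exact dvd_pow_self _ hp.ne_zero
  rw [hx, hs]
  have h2 : 1 ^ p + ((p : R) ^ k * J * y) ^ p + p * 1 * ((p : R) ^ k * J * y) * s - 1 =
      ((p : R) ^ k * J * y) ^ p + (p : R) ^ (k + 1) * J * (y * s) := by
    rw [one_pow]
    ring
  rw [h2]
  exact dvd_add h1 (dvd_mul_right _ _)

lemma mul_dvd_pow_prime_pow_sub_one {R : Type*} [CommRing R] {p : ℕ} (hp : p.Prime) {J x : R}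
    (h : (p : R) * J ∣ x ^ p - 1) (k : ℕ) :
    (p : R) ^ (k + 1) * J ∣ x ^ p ^ (k + 1) - 1 := by
  induction k with
  | zero => simpa using h
  | succ k ih =>
    rw [pow_succ p (k + 1), pow_mul]
    exact mul_dvd_pow_prime_sub_one hp (by omega) ih

lemma mul_dvd_one_add_pow_prime_sub_one {R : Type*} [CommRing R] {p : ℕ} (hp : p.Prime)
    {x w : R} (h : x ^ (p - 1) = -p * (1 + x * w)) :
    (p : R) * x ∣ (1 + x * w) ^ p - 1 := by
  obtain ⟨s, hs⟩ := exists_add_pow_prime_eq hp (1 : R) (x * w)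
  have hx : x ^ p = -p * (1 + x * w) * x := by rw [← h, pow_sub_one_mul hp.ne_zero]
  refine ⟨w * s - (1 + x * w) * w ^ p, ?_⟩
  rw [hs, mul_pow, hx, one_pow]
  ring

lemma mul_sq_dvd_one_add_pow_prime_sub_one {R : Type*} [CommRing R] {p : ℕ} (hp : p.Prime)
    {x w : R} (h : x ^ (p - 1) = -p * (1 + x * w)) (c : ℤ) (hw : x ∣ w - c) :
    (p : R) * x ^ 2 ∣ (1 + x * w) ^ p - 1 := by
  obtain ⟨s, hs⟩ := exists_one_add_pow_prime_eq hp (x * w)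
  have hx : x ^ p = -p * (1 + x * w) * x := by rw [← h, pow_sub_one_mul hp.ne_zero]
  have hxp : x ∣ (p : R) := by
    have h1 : x ∣ x ^ (p - 1) := dvd_pow_self _ (by have := hp.two_le; omega)
    have h2 : (p : R) = -x ^ (p - 1) - x * (p * w) := by rw [h]; ring
    rw [h2]
    exact dvd_sub h1.neg_right (dvd_mul_right _ _)
  have hfermat : x ∣ (c : R) ^ p - c := by
    have := Fact.mk hp
    have h1 : (p : ℤ) ∣ c ^ p - c := by
      rw [← ZMod.intCast_zmod_eq_zero_iff_dvd]
      simp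
    have h2 : ((p : ℤ) : R) ∣ ((c ^ p - c : ℤ) : R) := Int.cast_dvd_cast _ _ h1
    push_cast at h2
    exact hxp.trans h2
  have hww : x ∣ w ^ p - w := by
    have h1 : x ∣ w ^ p - (c : R) ^ p := hw.trans (sub_dvd_pow_sub_pow _ _ _)
    have h2 : w ^ p - w = (w ^ p - (c : R) ^ p) + ((c : R) ^ p - c) - (w - c) := by ring
    rw [h2]
    exact dvd_sub (dvd_add h1 hfermat) hw
  obtain ⟨t, ht⟩ := hww
  refine ⟨w ^ 2 * s - t - w * w ^ p, ?_⟩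
  rw [hs, mul_pow, hx]
  linear_combination -(p : R) * x * ht

lemma twistedTrace_eq_of_dvd_sub (p : ℕ) (hp : 0 < p) (r : ℤ) {f g : ℤ[X]}
    (h : (∑ i ∈ range p, X ^ i) ∣ f - g) : twistedTrace p r f = twistedTrace p r g := by
  obtain ⟨q, hq⟩ := h
  rw [← sub_eq_zero, ← map_sub, hq, twistedTrace_geom_sum_mul p hp]

lemma modCong_of_sub_eq {p : ℕ} (hp : p.Prime) {c : ℕ} {x y : ℚ} (z : ℤ)
    (h : x - y = (p : ℚ) ^ c * z) : modCong p c x y := by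
  have := Fact.mk hp
  by_cases hz : z = 0
  · left
    rw [hz, Int.cast_zero, mul_zero] at h
    linarith
  · right
    have hp0 : (p : ℚ) ≠ 0 := by exact_mod_cast hp.ne_zero
    rw [h, padicValRat.mul (pow_ne_zero _ hp0) (by exact_mod_cast hz), padicValRat.pow,
      padicValRat.self hp.one_lt, padicValRat.of_int]
    simp

/-- The ring `ℤ[ζ]` for a primitive `p`-th root of unity `ζ`. -/
abbrev primeCyclotomicRing (p : ℕ) : Type := AdjoinRoot (∑ i ∈ range p, X ^ i : ℤ[X])

lemma mk_one_sub_X_pow {p : ℕ} {W : ℤ[X]}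
    (hW : (1 - X : ℤ[X]) ^ (p - 1) =
      (∑ i ∈ range p, X ^ i) - (p : ℤ[X]) * (1 + (1 - X) * W)) :
    (AdjoinRoot.mk (∑ i ∈ range p, X ^ i : ℤ[X]) (1 - X)) ^ (p - 1) =
      -(p : primeCyclotomicRing p) *
        (1 + AdjoinRoot.mk _ (1 - X) * AdjoinRoot.mk _ W) := by
  rw [← map_pow, hW, map_sub, AdjoinRoot.mk_self]
  simp

lemma twistedTrace_one_sub_X_pow_mul {p : ℕ} (hp : p.Prime) {W : ℤ[X]}
    (hW : (1 - X : ℤ[X]) ^ (p - 1) =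
      (∑ i ∈ range p, X ^ i) - (p : ℤ[X]) * (1 + (1 - X) * W)) (r : ℤ) (m : ℕ) (g : ℤ[X]) :
    twistedTrace p r ((1 - X) ^ ((p - 1) * m) * g) =
      (-p) ^ m * twistedTrace p r ((1 + (1 - X) * W) ^ m * g) := by
  rw [← twistedTrace_C_mul]
  apply twistedTrace_eq_of_dvd_sub p hp.pos
  rw [← AdjoinRoot.mk_eq_mk]
  simp only [map_mul, map_pow, pow_mul]
  rw [mk_one_sub_X_pow hW, mul_pow, mul_assoc]
  simp

lemma Fp_sub_one_mul {p : ℕ} (hp : p.Prime) {W : ℤ[X]}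
    (hW : (1 - X : ℤ[X]) ^ (p - 1) =
      (∑ i ∈ range p, X ^ i) - (p : ℤ[X]) * (1 + (1 - X) * W)) (r : ℤ) (m : ℕ) :
    Fp p ((p - 1) * m) r = -(twistedTrace p r ((1 + (1 - X) * W) ^ m) : ℚ) := by
  have hp2 := hp.two_le
  have hp0 : (p : ℚ) ≠ 0 := by exact_mod_cast hp.ne_zero
  have h1 := twistedTrace_one_sub_X_pow p r ((p - 1) * m)
  have h2 := twistedTrace_one_sub_X_pow_mul hp hW r m 1
  rw [mul_one, mul_one] at h2
  rw [h2] at h1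
  have hdiv : Int.fdiv ((((p - 1) * m : ℕ) : ℤ) - 1) ((p : ℤ) - 1) = (m : ℤ) - 1 := by
    rw [Int.fdiv_eq_ediv_of_nonneg _ (by omega), Int.ediv_eq_iff_of_pos (by omega)]
    push_cast [hp.one_le]
    constructor <;> nlinarith
  rw [Fp, hdiv]
  have hz : (-(p : ℚ)) ^ (-((m : ℤ) - 1)) = -p * ((-(p : ℚ)) ^ m)⁻¹ := by
    rw [neg_sub, zpow_sub₀ (neg_ne_zero.2 hp0), zpow_one, zpow_natCast, div_eq_mul_inv]
  rw [hz]
  have hpm : (-(p : ℚ)) ^ m ≠ 0 := pow_ne_zero _ (neg_ne_zero.2 hp0)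
  push_cast at h1
  rcases Nat.eq_zero_or_pos m with rfl | hm
  · simp at h1 ⊢
    linarith
  · have hn : (p - 1) * m ≠ 0 := Nat.mul_ne_zero (by omega) hm.ne'
    rw [if_neg hn] at h1 ⊢
    field_simp
    linarith

lemma Fp_sub_one_mul_add {p : ℕ} (hp : p.Prime) (hp2 : p ≠ 2) {W : ℤ[X]}
    (hW : (1 - X : ℤ[X]) ^ (p - 1) =
      (∑ i ∈ range p, X ^ i) - (p : ℤ[X]) * (1 + (1 - X) * W)) (r : ℤ) (m : ℕ) :
    p * Fp p ((p - 1) * m + p - 2) r =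
      twistedTrace p r ((1 + (1 - X) * W) ^ m * (1 - X) ^ (p - 2)) := by
  have hp3 : 3 ≤ p := by have := hp.two_le; omega
  have hp0 : (p : ℚ) ≠ 0 := by exact_mod_cast hp.ne_zero
  have h1 := twistedTrace_one_sub_X_pow p r ((p - 1) * m + p - 2)
  have h2 := twistedTrace_one_sub_X_pow_mul hp hW r m ((1 - X) ^ (p - 2))
  rw [← pow_add, ← Nat.add_sub_assoc hp.two_le] at h2
  have hn : (p - 1) * m + p - 2 ≠ 0 := by omega
  rw [h2, if_neg hn] at h1
  have hdiv : Int.fdiv ((((p - 1) * m + p - 2 : ℕ) : ℤ) - 1) ((p : ℤ) - 1) = (m : ℤ) := by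
    rw [Int.fdiv_eq_ediv_of_nonneg _ (by omega), Int.ediv_eq_iff_of_pos (by omega)]
    rw [Nat.cast_sub (by omega)]
    push_cast [hp.one_le]
    constructor <;> nlinarith
  rw [Fp, hdiv, if_neg hn]
  have hpm : (-(p : ℚ)) ^ m ≠ 0 := pow_ne_zero _ (neg_ne_zero.2 hp0)
  rw [zpow_neg, zpow_natCast]
  push_cast at h1
  field_simp
  linarith

lemma dvd_pow_sub_pow_mod {R : Type*} [CommRing R] {d u : R} {N : ℕ} (h : d ∣ u ^ N - 1)
    (m : ℕ) : d ∣ u ^ m - u ^ (m % N) := by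
  have h1 : d ∣ (u ^ N) ^ (m / N) - 1 := by
    have := sub_dvd_pow_sub_pow (u ^ N) 1 (m / N)
    rw [one_pow] at this
    exact h.trans this
  have h2 : u ^ m - u ^ (m % N) = u ^ (m % N) * ((u ^ N) ^ (m / N) - 1) := by
    rw [mul_sub, ← pow_mul, ← pow_add, Nat.mod_add_div, mul_one]
  rw [h2]
  exact h1.mul_left _

lemma Fp_sub_one_mul_modCong {p : ℕ} (hp : p.Prime) (r : ℤ) (m k : ℕ) :
    modCong p (k + 2 : ℕ) (Fp p ((p - 1) * m) r) (Fp p ((p - 1) * (m % p ^ (k + 1))) r) := by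
  obtain ⟨W, hW⟩ := exists_one_sub_X_pow_eq p hp
  rw [Fp_sub_one_mul hp hW, Fp_sub_one_mul hp hW]
  obtain ⟨y, hy⟩ := dvd_pow_sub_pow_mod (mul_dvd_pow_prime_pow_sub_one hp
    (mul_dvd_one_add_pow_prime_sub_one hp (mk_one_sub_X_pow hW)) k) m
  obtain ⟨Y, rfl⟩ := AdjoinRoot.mk_surjective y
  have hT : twistedTrace p r ((1 + (1 - X) * W) ^ m - (1 + (1 - X) * W) ^ (m % p ^ (k + 1))) =
      twistedTrace p r (C ((p : ℤ) ^ (k + 1)) * ((1 - X) * Y)) := by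
    apply twistedTrace_eq_of_dvd_sub p hp.pos
    rw [← AdjoinRoot.mk_eq_mk]
    simp only [map_sub, map_pow, map_add, map_one, map_mul] at hy ⊢
    rw [hy]
    simp [mul_assoc]
  obtain ⟨z, hz⟩ := dvd_twistedTrace_one_sub_X_mul p r Y
  rw [twistedTrace_C_mul, hz, map_sub] at hT
  apply modCong_of_sub_eq hp (-z)
  have hT' := congrArg (Int.cast : ℤ → ℚ) hT
  push_cast at hT' ⊢
  linear_combination -hT'

lemma Fp_sub_one_mul_add_modCong {p : ℕ} (hp : p.Prime) (hp2 : p ≠ 2) (r : ℤ) (m k : ℕ) :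
    modCong p (k + 2 : ℕ) (Fp p ((p - 1) * m + p - 2) r)
      (Fp p ((p - 1) * (m % p ^ (k + 1)) + p - 2) r) := by
  obtain ⟨W, hW⟩ := exists_one_sub_X_pow_eq p hp
  have h1 := Fp_sub_one_mul_add hp hp2 hW r m
  have h2 := Fp_sub_one_mul_add hp hp2 hW r (m % p ^ (k + 1))
  have hc : AdjoinRoot.mk (∑ i ∈ range p, X ^ i : ℤ[X]) (1 - X) ∣
      AdjoinRoot.mk _ W - ((W.eval 1 : ℤ) : primeCyclotomicRing p) := by
    have h : (1 - X) ∣ W - C (W.eval 1) := by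
      rw [← neg_dvd, neg_sub, ← C_1]
      exact X_sub_C_dvd_sub_C_eval
    have := map_dvd (AdjoinRoot.mk (∑ i ∈ range p, X ^ i : ℤ[X])) h
    simpa using this
  obtain ⟨y, hy⟩ := dvd_pow_sub_pow_mod (mul_dvd_pow_prime_pow_sub_one hp
    (mul_sq_dvd_one_add_pow_prime_sub_one hp (mk_one_sub_X_pow hW) _ hc) k) m
  obtain ⟨Y, rfl⟩ := AdjoinRoot.mk_surjective y
  have hT : twistedTrace p r ((1 + (1 - X) * W) ^ m * (1 - X) ^ (p - 2) -
      (1 + (1 - X) * W) ^ (m % p ^ (k + 1)) * (1 - X) ^ (p - 2)) =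
      twistedTrace p r (C (-(p : ℤ) ^ (k + 2)) * ((1 - X) * ((1 + (1 - X) * W) * Y))) := by
    apply twistedTrace_eq_of_dvd_sub p hp.pos
    rw [← AdjoinRoot.mk_eq_mk]
    have hpow := mk_one_sub_X_pow hW
    rw [show p - 1 = p - 2 + 1 by have := hp.two_le; omega, pow_succ] at hpow
    simp only [map_sub, map_pow, map_add, map_one, map_mul, map_neg, map_natCast] at hy hpow ⊢
    rw [← sub_mul, hy]
    linear_combination ((p : primeCyclotomicRing p) ^ (k + 1) *
      (1 - AdjoinRoot.mk _ X) * AdjoinRoot.mk _ Y) * hpow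
  obtain ⟨z, hz⟩ := dvd_twistedTrace_one_sub_X_mul p r ((1 + (1 - X) * W) * Y)
  rw [twistedTrace_C_mul, hz, map_sub] at hT
  apply modCong_of_sub_eq hp (-z)
  have hT' := congrArg (Int.cast : ℤ → ℚ) hT
  push_cast at hT' ⊢
  have hp0 : (p : ℚ) ≠ 0 := by exact_mod_cast hp.ne_zero
  apply mul_left_cancel₀ hp0
  linear_combination hT' + h1 - h2

lemma Fp_zero {p : ℕ} (hp : p.Prime) (r : ℤ) :
    Fp p 0 r = 1 - (p : ℚ) * (if (p : ℤ) ∣ r then 1 else 0) := by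
  obtain ⟨W, hW⟩ := exists_one_sub_X_pow_eq p hp
  have h := Fp_sub_one_mul hp hW r 0
  rw [mul_zero, pow_zero, ← monomial_zero_one, twistedTrace_monomial] at h
  rw [h]
  simp only [Nat.cast_zero, zero_sub, ← Int.dvd_iff_emod_eq_zero, dvd_neg]
  split_ifs <;> push_cast <;> ring

theorem stmt3 (p : ℕ) (hp : p.Prime) (r : ℤ) (n : ℕ) (hdvd : (p - 1) ∣ n) :
    (∀ b : ℕ, 2 ≤ b →
      modCong p b (Fp p n r) (Fp p (n % Nat.totient (p^b)) r) ∧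
      modCong p b (Fp p (n + p - 2) r) (Fp p (n % Nat.totient (p^b) + p - 2) r)) ∧
    (0 < n → modCong p ((padicValNat p (p*n) : ℤ) + 1)
      (Fp p (p*n) r + (p:ℚ) * (if (p:ℤ) ∣ r then 1 else 0) - 1) 0) := by
  have := Fact.mk hp
  refine ⟨fun b hb => ?_, fun hn => ?_⟩
  · obtain ⟨m, rfl⟩ := hdvd
    obtain ⟨k, rfl⟩ := Nat.exists_eq_add_of_le' hb
    have hmod : (p - 1) * m % Nat.totient (p ^ (k + 2)) = (p - 1) * (m % p ^ (k + 1)) := by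
      rw [Nat.totient_prime_pow hp (by omega), mul_comm (p ^ _), Nat.mul_mod_mul_left]
      rfl
    rw [hmod]
    refine ⟨Fp_sub_one_mul_modCong hp r m k, ?_⟩
    by_cases hp2 : p = 2
    · subst hp2
      simpa using Fp_sub_one_mul_modCong hp r m k
    · exact Fp_sub_one_mul_add_modCong hp hp2 r m k
  · obtain ⟨m, rfl⟩ := hdvd
    have hm : m ≠ 0 := by rintro rfl; simp at hn
    have hp1 : p - 1 ≠ 0 := by have := hp.two_le; omega
    have hval : padicValNat p (p * ((p - 1) * m)) = padicValNat p m + 1 := by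
      rw [padicValNat.mul hp.ne_zero (Nat.mul_ne_zero hp1 hm), padicValNat.mul hp1 hm,
        padicValNat_self, padicValNat.eq_zero_of_not_dvd (n := p - 1)
          (Nat.not_dvd_of_pos_of_lt (by omega) (by omega))]
      ring
    have h := Fp_sub_one_mul_modCong hp r (p * m) (padicValNat p m)
    have hzero : p * m % p ^ (padicValNat p m + 1) = 0 := by
      apply Nat.mod_eq_zero_of_dvd
      rw [pow_succ']
      exact mul_dvd_mul_left _ pow_padicValNat_dvd
    rw [hzero, mul_zero, Fp_zero hp, mul_left_comm] at h
    rw [hval]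
    unfold modCong at h ⊢
    rcases h with h | h
    · left
      rw [h]
      ring
    · right
      push_cast at h ⊢
      have harg : Fp p (p * ((p - 1) * m)) r + (p : ℚ) * (if (p : ℤ) ∣ r then 1 else 0) - 1 - 0 =
          Fp p (p * ((p - 1) * m)) r - (1 - (p : ℚ) * (if (p : ℤ) ∣ r then 1 else 0)) := by ring
      rw [harg]
      linarith
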